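/- arXiv:1902.07937 — 3 statements merged into one kernel-verified Lean document; each statement's English description precedes it below -/
import Mathlib

section
/- Every social Schelling game whose topology is a graph of maximum degree 2 admits at least one equilibrium assignment. -/
/-- A (social) Schelling game: agents `A`, of which `strategic` are the strategic
ones (the rest being stubborn), a social network `net` on the agents (the friends
of an agent are her neighbors in `net`, all other agents are her enemies), a
topology `top` on the set of locations `V`, and the preferred locations `loc`
of the (stubborn) agents. -/
structure SchellingGame (A V : Type) where
  strategic : Finset A
  net : SimpleGraph A
  top : SimpleGraph V
  loc : A → V

namespace SchellingGame

variable {A V : Type} [Fintype A] [DecidableEq A] [Fintype V] [DecidableEq V]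

/-- There are `n ≥ 2` agents, strictly more locations than agents, and the
stubborn agents have pairwise distinct preferred locations. -/
def WellFormed (g : SchellingGame A V) : Prop :=
  2 ≤ Fintype.card A ∧ Fintype.card A < Fintype.card V ∧
    Set.InjOn g.loc ↑(g.strategicᶜ)

/-- An assignment is an injective placement of the agents on the nodes of the
topology which places every stubborn agent at her preferred location. -/
def IsAssignment (g : SchellingGame A V) (v : A → V) : Prop :=
  Function.Injective v ∧ ∀ i ∉ g.strategic, v i = g.loc i

/-- The number of friends of `i` occupying nodes adjacent to `v i`. -/
noncomputable def fcount (g : SchellingGame A V) (v : A → V) (i : A) : ℕ :=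
  Nat.card {j : A // g.net.Adj i j ∧ g.top.Adj (v i) (v j)}

/-- The number of enemies of `i` occupying nodes adjacent to `v i`. -/
noncomputable def ecount (g : SchellingGame A V) (v : A → V) (i : A) : ℕ :=
  Nat.card {j : A // j ≠ i ∧ ¬ g.net.Adj i j ∧ g.top.Adj (v i) (v j)}

/-- The utility of agent `i` under assignment `v`: `0` if `i` has no adjacent
friends, and otherwise the fraction of friends among her occupied neighbors. -/
noncomputable def util (g : SchellingGame A V) (v : A → V) (i : A) : ℚ :=
  if g.fcount v i = 0 then 0
  else (g.fcount v i : ℚ) / ((g.fcount v i : ℚ) + (g.ecount v i : ℚ))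

/-- An assignment is an equilibrium if no strategic agent can strictly increase
her utility by relocating to an unoccupied node. -/
def IsEquilibrium (g : SchellingGame A V) (v : A → V) : Prop :=
  g.IsAssignment v ∧ ∀ i ∈ g.strategic, ∀ z : V, (∀ j : A, v j ≠ z) →
    g.util (Function.update v i z) i ≤ g.util v i

/-- The social welfare: the total utility of the strategic agents. -/
noncomputable def SW (g : SchellingGame A V) (v : A → V) : ℚ :=
  ∑ i ∈ g.strategic, g.util v i

/-- `g` is a `k`-typed Schelling game with type map `typ`: two distinct agents are
friends iff they have the same type, and every type is nonempty. -/
def IsTypedGame (g : SchellingGame A V) (k : ℕ) (typ : A → Fin k) : Prop :=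
  (∀ i j : A, g.net.Adj i j ↔ (i ≠ j ∧ typ i = typ j)) ∧ ∀ c : Fin k, ∃ i : A, typ i = c

end SchellingGame

/-- A star graph: one center node adjacent to all other nodes, and no other edges. -/
def IsStar {V : Type} (G : SimpleGraph V) : Prop :=
  ∃ c : V, ∀ a b : V, G.Adj a b ↔ (a ≠ b ∧ (a = c ∨ b = c))

/-! Score an agent with `f` friends and `e` enemies among her neighbors by `2 * f - e`. When
`f + e ≤ 2`, a strictly larger ratio `f / (f + e)` forces a strictly larger score, so every
improving relocation increases the score of the agent who moves. Friendship and adjacency are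
symmetric, so the total score of all agents is a potential: a relocation changes it by twice the
change of the mover's score. It is an integer bounded above, and an assignment maximizing it is an
equilibrium. -/

theorem injective_update {α β : Type*} [DecidableEq α] {f : α → β} (hf : f.Injective)
    {a : α} {b : β} (hb : ∀ x, f x ≠ b) : (Function.update f a b).Injective := by
  intro x y hxy
  simp only [Function.update_apply] at hxy
  split_ifs at hxy with hx hy hy
  · exact hx.trans hy.symm
  · exact absurd hxy.symm (hb y)
  · exact absurd hxy (hb x)
  · exact hf hxy

theorem exists_injective_eqOn {α β : Type*} [Finite α] {s : Set α} {f w : α → β}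
    (hf : s.InjOn f) (hw : w.Injective) : ∃ v : α → β, v.Injective ∧ s.EqOn v f := by
  classical
  have := Fintype.ofFinite α
  have hcard : Fintype.card α ≤ (s.toFinset.image f ∪ Finset.univ.image w).card :=
    (Finset.card_image_of_injective _ hw).ge.trans (Finset.card_le_card Finset.subset_union_right)
  obtain ⟨t, hst, -, ht⟩ := Finset.exists_subsuperset_card_eq Finset.subset_union_left
    (Finset.card_image_le.trans (Finset.card_le_univ _)) hcard
  obtain ⟨e, he⟩ := Finset.exists_equiv_extend_of_card_eq ht.symm hst (by simpa using hf)
  exact ⟨fun a => e a, Subtype.val_injective.comp e.injective,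
    fun a ha => he a (Set.mem_toFinset.2 ha)⟩

theorem sum_sum_eq_two_nsmul_sum {ι M : Type*} [Fintype ι] [AddCommMonoid M] {D : ι → ι → M} {i : ι}
    (hsymm : ∀ a b, D a b = D b a) (hdiag : D i i = 0)
    (hoff : ∀ a b, a ≠ i → b ≠ i → D a b = 0) : ∑ a, ∑ b, D a b = 2 • ∑ b, D i b := by
  classical
  have hD (a b : ι) : D a b = (if a = i then D i b else 0) + (if b = i then D i a else 0) := by
    by_cases ha : a = i <;> by_cases hb : b = i <;> simp_all
  calc ∑ a, ∑ b, D a b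
      = ∑ a, ∑ b, ((if a = i then D i b else 0) + (if b = i then D i a else 0)) :=
        Finset.sum_congr rfl fun a _ => Finset.sum_congr rfl fun b _ => hD a b
    _ = 2 • ∑ b, D i b := by simp [Finset.sum_add_distrib, two_nsmul]

theorem two_mul_sub_lt_of_div_add_lt {f e f' e' : ℕ} (h : f + e ≤ 2) (h' : f' + e' ≤ 2)
    (hlt : (f / (f + e) : ℚ) < f' / (f' + e')) : (2 * f - e : ℤ) < 2 * f' - e' := by
  have hf' : 0 < f' := by
    by_contra! hf'
    have : (0 : ℚ) ≤ f / (f + e) := by positivity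
    simp_all [this.not_gt]
  rcases f.eq_zero_or_pos with rfl | hf
  · lia
  · have hcross : f * e' < f' * e := by
      rw [div_lt_div_iff₀ (by positivity) (by positivity)] at hlt
      norm_cast at hlt
      linarith
    obtain ⟨rfl, rfl⟩ : f = 1 ∧ e = 1 := by
      have : 0 < e := Nat.pos_of_mul_pos_left ((Nat.zero_le _).trans_lt hcross)
      lia
    lia

namespace SchellingGame

variable {A V : Type} {g : SchellingGame A V} {v : A → V} {i : A}

theorem exists_isAssignment [Fintype A] [DecidableEq A] (hinj : Set.InjOn g.loc ↑(g.strategicᶜ))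
    (hemb : Nonempty (A ↪ V)) : ∃ v, g.IsAssignment v := by
  obtain ⟨w⟩ := hemb
  obtain ⟨v, hv, hloc⟩ := exists_injective_eqOn hinj w.injective
  exact ⟨v, hv, fun i hi => hloc (by simpa using hi)⟩

theorem IsAssignment.update [DecidableEq A] (hv : g.IsAssignment v) (hi : i ∈ g.strategic) {z : V}
    (hz : ∀ j, v j ≠ z) : g.IsAssignment (Function.update v i z) := by
  refine ⟨injective_update hv.1 hz, fun j hj => ?_⟩
  rw [Function.update_of_ne (ne_of_mem_of_not_mem hi hj).symm, hv.2 j hj]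

open Classical in
theorem fcount_eq_card_filter [Fintype A] (g : SchellingGame A V) (v : A → V) (i : A) :
    g.fcount v i =
      ((Finset.univ.filter fun j => g.top.Adj (v i) (v j)).filter fun j => g.net.Adj i j).card := by
  rw [fcount, Nat.card_eq_fintype_card, Fintype.card_subtype, Finset.filter_filter]
  simp only [and_comm]

open Classical in
theorem ecount_eq_card_filter [Fintype A] (g : SchellingGame A V) (v : A → V) (i : A) :
    g.ecount v i =
      ((Finset.univ.filter fun j => g.top.Adj (v i) (v j)).filter
        fun j => ¬ g.net.Adj i j).card := by
  rw [ecount, Nat.card_eq_fintype_card, Fintype.card_subtype, Finset.filter_filter]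
  congr 1 with j
  have : g.top.Adj (v i) (v j) → j ≠ i := by rintro h rfl; exact g.top.irrefl h
  simp only [Finset.mem_filter]
  tauto

theorem fcount_add_ecount_le_degree [Finite A] (hv : v.Injective) (i : A)
    [Fintype (g.top.neighborSet (v i))] : g.fcount v i + g.ecount v i ≤ g.top.degree (v i) := by
  classical
  have := Fintype.ofFinite A
  rw [fcount_eq_card_filter, ecount_eq_card_filter, Finset.card_filter_add_card_filter_not]
  exact Finset.card_le_card_of_injOn v (fun j hj => by simpa using hj) hv.injOn

-- An agent without neighbors is covered by the convention `0 / 0 = 0`.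
theorem util_eq_div (g : SchellingGame A V) (v : A → V) (i : A) :
    g.util v i = g.fcount v i / (g.fcount v i + g.ecount v i) := by
  unfold util
  split_ifs with h <;> simp [h]

/-- The score of agent `i`, an integer that strictly increases with her utility as long as she has
at most two neighbors. The coefficients put one friend and one enemy, of utility `1 / 2`, strictly
between the neighborhoods of utility `0` (score at most `0`) and those of utility `1` (score at
least `2`). -/
noncomputable def score (g : SchellingGame A V) (v : A → V) (i : A) : ℤ :=
  2 * g.fcount v i - g.ecount v i

/-- The potential of an assignment: the total score of all agents, stubborn ones included. -/
noncomputable def potential [Fintype A] (g : SchellingGame A V) (v : A → V) : ℤ :=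
  ∑ i, g.score v i

open Classical in
/-- The contribution of agent `j` to the score of agent `i`. -/
noncomputable def pairScore (g : SchellingGame A V) (v : A → V) (i j : A) : ℤ :=
  if g.top.Adj (v i) (v j) then if g.net.Adj i j then 2 else -1 else 0

theorem pairScore_comm (g : SchellingGame A V) (v : A → V) (i j : A) :
    g.pairScore v i j = g.pairScore v j i := by
  classical
  exact if_congr (g.top.adj_comm _ _) (if_congr (g.net.adj_comm _ _) rfl rfl) rfl

theorem pairScore_self (g : SchellingGame A V) (v : A → V) (i : A) : g.pairScore v i i = 0 := by
  simp [pairScore]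

theorem pairScore_update_of_ne [DecidableEq A] {a b : A} (ha : a ≠ i) (hb : b ≠ i) (z : V) :
    g.pairScore (Function.update v i z) a b = g.pairScore v a b := by
  unfold pairScore
  rw [Function.update_of_ne ha, Function.update_of_ne hb]

theorem sum_pairScore [Fintype A] (g : SchellingGame A V) (v : A → V) (i : A) :
    ∑ j, g.pairScore v i j = g.score v i := by
  classical
  simp only [pairScore, score, fcount_eq_card_filter, ecount_eq_card_filter, ← Finset.sum_filter,
    Finset.sum_ite, Finset.sum_const, nsmul_eq_mul]
  ring

theorem potential_update_sub_potential [Fintype A] [DecidableEq A] (g : SchellingGame A V)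
    (v : A → V) (i : A) (z : V) :
    g.potential (Function.update v i z) - g.potential v =
      2 * (g.score (Function.update v i z) i - g.score v i) := by
  simp only [potential, ← sum_pairScore, ← Finset.sum_sub_distrib]
  rw [sum_sum_eq_two_nsmul_sum (i := i), nsmul_eq_mul, Nat.cast_ofNat]
  · exact fun a b => congrArg₂ _ (g.pairScore_comm _ a b) (g.pairScore_comm v a b)
  · simp only [pairScore_self, sub_self]
  · exact fun a b ha hb => sub_eq_zero.2 (pairScore_update_of_ne ha hb z)

theorem potential_le [Fintype A] (g : SchellingGame A V) (v : A → V) :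
    g.potential v ≤ Fintype.card A * (2 * Fintype.card A) := by
  have hscore (i : A) : g.score v i ≤ 2 * Fintype.card A := by
    have : g.fcount v i ≤ Fintype.card A :=
      (Finite.card_subtype_le _).trans_eq Nat.card_eq_fintype_card
    unfold score
    lia
  calc g.potential v ≤ Finset.univ.card • (2 * Fintype.card A : ℤ) :=
        Finset.sum_le_card_nsmul _ _ _ fun i _ => hscore i
    _ = Fintype.card A * (2 * Fintype.card A) := by rw [Finset.card_univ, nsmul_eq_mul]

theorem exists_isAssignment_forall_potential_le [Fintype A] (h : ∃ v, g.IsAssignment v) :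
    ∃ v, g.IsAssignment v ∧ ∀ w, g.IsAssignment w → g.potential w ≤ g.potential v := by
  obtain ⟨_, ⟨v, hv, rfl⟩, hmax⟩ := Int.exists_greatest_of_bdd
    (P := fun n => ∃ v, g.IsAssignment v ∧ g.potential v = n)
    ⟨_, by rintro _ ⟨v, -, rfl⟩; exact g.potential_le v⟩ (h.imp' _ fun v hv => ⟨v, hv, rfl⟩)
  exact ⟨v, hv, fun w hw => hmax _ ⟨w, hw, rfl⟩⟩

theorem score_lt_score_of_util_lt_util {w : A → V} (hv : g.fcount v i + g.ecount v i ≤ 2)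
    (hw : g.fcount w i + g.ecount w i ≤ 2) (h : g.util v i < g.util w i) :
    g.score v i < g.score w i := by
  rw [util_eq_div, util_eq_div] at h
  exact two_mul_sub_lt_of_div_add_lt hv hw h

end SchellingGame

open SchellingGame in
theorem stmt1_general {A V : Type} [Finite A] [DecidableEq A] {g : SchellingGame A V}
    [g.top.LocallyFinite] (hdeg : ∀ a, g.top.degree a ≤ 2) (hassign : ∃ v, g.IsAssignment v) :
    ∃ v, g.IsEquilibrium v := by
  have := Fintype.ofFinite A
  have hcount {w : A → V} (hw : g.IsAssignment w) (i : A) : g.fcount w i + g.ecount w i ≤ 2 :=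
    (fcount_add_ecount_le_degree hw.1 i).trans (hdeg (w i))
  obtain ⟨v, hv, hmax⟩ := exists_isAssignment_forall_potential_le hassign
  refine ⟨v, hv, fun i hi z hz => ?_⟩
  by_contra! hlt
  have hv' : g.IsAssignment (Function.update v i z) := hv.update hi hz
  have hscore := score_lt_score_of_util_lt_util (hcount hv i) (hcount hv' i) hlt
  have hpot := g.potential_update_sub_potential v i z
  linarith [hmax _ hv']

/-- Every social Schelling game whose topology is a graph of maximum
degree 2 admits at least one equilibrium assignment. -/
theorem stmt1 (A V : Type) [Fintype A] [DecidableEq A] [Fintype V] [DecidableEq V]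
    (g : SchellingGame A V) (hwf : g.WellFormed)
    (hdeg : ∀ a : V, Nat.card {b : V // g.top.Adj a b} ≤ 2) :
    ∃ v : A → V, g.IsEquilibrium v := by
  classical
  refine stmt1_general (fun a => ?_)
    (SchellingGame.exists_isAssignment hwf.2.2 (Function.Embedding.nonempty_of_card_le hwf.2.1.le))
  rw [← SimpleGraph.card_neighborSet_eq_degree, ← Nat.card_eq_fintype_card]
  exact hdeg a
end

section
/- Let H = (X,Y) be an undirected graph with |X| ≥ 3. Construct a social Schelling game in which the agents are the vertices of H, all agents are strategic, the social network is H itself (so the friends of agent p are the neighbors of p in H), and the topology is the disjoint union of a cycle on |X| nodes and one isolated node. Then this game admits an assignment with social welfare at least |X| if and only if H has a Hamiltonian cycle. -/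
/-- The topology: a cycle on the `m` nodes `some i` together with one isolated node
`none`. -/
def top7 (m : ℕ) : SimpleGraph (Option (Fin m)) :=
  SimpleGraph.fromRel (fun p q => match p, q with
    | some i, some j => (j : ℕ) = ((i : ℕ) + 1) % m
    | _, _ => False)

/-- The social Schelling game whose agents are the vertices of `H`, all strategic,
whose social network is `H` itself, and whose topology is the disjoint union of a
cycle on `|X|` nodes and one isolated node. -/
def game7 (X : Type) [Fintype X] [DecidableEq X] (H : SimpleGraph X) :
    SchellingGame X (Option (Fin (Fintype.card X))) where
  strategic := Finset.univ
  net := H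
  top := top7 (Fintype.card X)
  loc := fun _ => none

/-!
An agent's utility is at most `1`, with equality exactly when she has a neighbour and all her
neighbours are friends. So welfare `|X|` forces every agent to have utility `1`; then nobody sits on
the isolated node, the agents fill the cycle, and cycle edges only join friends: read around the
cycle, the agents form a Hamiltonian cycle of `H`. Conversely, seating the agents in the order of a
Hamiltonian cycle gives everyone utility `1`.
-/

namespace SchellingGame

variable {A V : Type} {g : SchellingGame A V} {v : A → V} {i : A}

theorem fcount_ne_zero_iff [Finite A] :
    g.fcount v i ≠ 0 ↔ ∃ j, g.net.Adj i j ∧ g.top.Adj (v i) (v j) := by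
  rw [fcount, Ne, Finite.card_eq_zero_iff, not_isEmpty_iff, nonempty_subtype]

theorem ecount_eq_zero_iff [Finite A] :
    g.ecount v i = 0 ↔ ∀ j, g.top.Adj (v i) (v j) → g.net.Adj i j := by
  rw [ecount, Finite.card_eq_zero_iff, isEmpty_subtype]
  refine forall_congr' fun j => ⟨fun h hadj => ?_, fun h ⟨_, henemy, hadj⟩ => henemy (h hadj)⟩
  have hne : j ≠ i := fun hji => hadj.ne (congrArg v hji.symm)
  exact by_contra fun henemy => h ⟨hne, henemy, hadj⟩

theorem util_le_one (g : SchellingGame A V) (v : A → V) (i : A) : g.util v i ≤ 1 := by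
  unfold util
  split_ifs
  · exact zero_le_one
  · exact div_le_one_of_le₀ (le_add_of_nonneg_right (Nat.cast_nonneg _)) (by positivity)

theorem util_eq_one_iff_fcount_ecount :
    g.util v i = 1 ↔ g.fcount v i ≠ 0 ∧ g.ecount v i = 0 := by
  unfold util
  split_ifs with hf
  · simp [hf]
  · have hsum_ne : (g.fcount v i : ℚ) + g.ecount v i ≠ 0 := by positivity
    simp [div_eq_one_iff_eq hsum_ne, hf]

theorem util_eq_one_iff [Finite A] :
    g.util v i = 1 ↔
      (∃ j, g.top.Adj (v i) (v j)) ∧ ∀ j, g.top.Adj (v i) (v j) → g.net.Adj i j := by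
  rw [util_eq_one_iff_fcount_ecount, fcount_ne_zero_iff, ecount_eq_zero_iff]
  exact and_congr_left fun hfriend =>
    exists_congr fun j => and_iff_right_of_imp (hfriend j)

theorem card_strategic_le_SW_iff :
    (g.strategic.card : ℚ) ≤ g.SW v ↔ ∀ i ∈ g.strategic, g.util v i = 1 := by
  have hle : ∀ i ∈ g.strategic, g.util v i ≤ 1 := fun i _ => g.util_le_one v i
  have hSW : g.SW v ≤ g.strategic.card := by simpa [SW] using Finset.sum_le_sum hle
  rw [hSW.ge_iff_eq, ← Finset.sum_eq_sum_iff_of_le hle]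
  simp [SW]

end SchellingGame

theorem exists_equiv_apply_eq_some {α β : Type*} [Fintype α] [Fintype β]
    (hcard : Fintype.card α = Fintype.card β) {v : α → Option β} (hv : Function.Injective v)
    (hnone : ∀ a, v a ≠ none) : ∃ e : β ≃ α, ∀ b, v (e b) = some b := by
  choose w hw using fun a => Option.ne_none_iff_exists'.1 (hnone a)
  have hwinj : Function.Injective w := fun a a' h => hv (by rw [hw, hw, h])
  have hwbij : Function.Bijective w :=
    (Fintype.bijective_iff_injective_and_card w).2 ⟨hwinj, hcard⟩
  let e := Equiv.ofBijective w hwbij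
  exact ⟨e.symm, fun b => (hw _).trans (congrArg some (e.apply_symm_apply b))⟩

namespace SchellingGame

variable {A W : Type} [Fintype A] [Fintype W] {g : SchellingGame A (Option W)}

theorem exists_isAssignment_card_le_SW_iff (hcard : Fintype.card A = Fintype.card W)
    (hstrategic : g.strategic = Finset.univ) (hnone : ∀ p, ¬ g.top.Adj none p)
    (hsome : ∀ w, ∃ w', g.top.Adj (some w) (some w')) :
    (∃ v, g.IsAssignment v ∧ (Fintype.card A : ℚ) ≤ g.SW v) ↔
      ∃ e : W ≃ A, ∀ w w', g.top.Adj (some w) (some w') → g.net.Adj (e w) (e w') := by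
  have hSW : ∀ v, (Fintype.card A : ℚ) ≤ g.SW v ↔ ∀ a, g.util v a = 1 := fun v => by
    simpa [hstrategic] using card_strategic_le_SW_iff (g := g) (v := v)
  simp only [hSW, util_eq_one_iff]
  constructor
  · rintro ⟨v, ⟨hinj, -⟩, hv⟩
    have hv_ne : ∀ a, v a ≠ none := fun a ha =>
      let ⟨_, hadj⟩ := (hv a).1
      hnone _ (ha ▸ hadj)
    obtain ⟨e, he⟩ := exists_equiv_apply_eq_some hcard hinj hv_ne
    exact ⟨e, fun w w' hadj => (hv (e w)).2 (e w') (by rwa [he, he])⟩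
  · rintro ⟨e, he⟩
    have hinj : Function.Injective (some ∘ e.symm) :=
      (Option.some_injective W).comp e.symm.injective
    refine ⟨some ∘ e.symm, ⟨hinj, by simp [hstrategic]⟩, fun a => ⟨?_, ?_⟩⟩
    · obtain ⟨w, hw⟩ := hsome (e.symm a)
      exact ⟨e w, by simpa using hw⟩
    · exact fun b hadj => by simpa using he _ _ hadj

end SchellingGame

section CycleTopology

variable {m : ℕ}

theorem val_finRotate (i : Fin m) : (finRotate m i : ℕ) = (i + 1) % m := by
  have := i.neZero
  rw [finRotate_apply, Fin.val_add, Fin.val_one', Nat.add_mod_mod]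

theorem finRotate_apply_ne (hm : 2 ≤ m) (i : Fin m) : finRotate m i ≠ i := by
  rw [← Equiv.Perm.mem_support, support_finRotate_of_le hm]
  exact Finset.mem_univ i

theorem top7_not_adj_none (p : Option (Fin m)) : ¬ (top7 m).Adj none p := by
  cases p <;> simp [top7]

theorem top7_adj_some_iff {i j : Fin m} :
    (top7 m).Adj (some i) (some j) ↔ i ≠ j ∧ (finRotate m i = j ∨ finRotate m j = i) := by
  simp only [top7, SimpleGraph.fromRel_adj, ne_eq, Option.some_inj, Fin.ext_iff, val_finRotate,
    eq_comm]

theorem top7_adj_finRotate (hm : 2 ≤ m) (i : Fin m) :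
    (top7 m).Adj (some i) (some (finRotate m i)) :=
  top7_adj_some_iff.2 ⟨(finRotate_apply_ne hm i).symm, Or.inl rfl⟩

theorem forall_top7_adj_imp_adj_iff (hm : 2 ≤ m) {X : Type*} {H : SimpleGraph X} {f : Fin m → X} :
    (∀ i j, (top7 m).Adj (some i) (some j) → H.Adj (f i) (f j)) ↔
      ∀ i, H.Adj (f i) (f (finRotate m i)) := by
  refine ⟨fun h i => h i _ (top7_adj_finRotate hm i), fun h i j hadj => ?_⟩
  obtain ⟨-, rfl | rfl⟩ := top7_adj_some_iff.1 hadj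
  · exact h i
  · exact (h j).symm

end CycleTopology

/-- the game above admits an assignment with social welfare at least |X|
iff H has a Hamiltonian cycle, i.e. a cyclic ordering of all its vertices in which
consecutive vertices are adjacent. -/
theorem stmt7 (X : Type) [Fintype X] [DecidableEq X] (H : SimpleGraph X)
    (hX : 3 ≤ Fintype.card X) :
    (∃ v, (game7 X H).IsAssignment v ∧ (Fintype.card X : ℚ) ≤ (game7 X H).SW v) ↔
      ∃ e : Fin (Fintype.card X) ≃ X, ∀ i : Fin (Fintype.card X),
        H.Adj (e i) (e ⟨((i : ℕ) + 1) % Fintype.card X, Nat.mod_lt _ (by omega)⟩) := by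
  have htwo : 2 ≤ Fintype.card X := by omega
  have hrotate : ∀ i : Fin (Fintype.card X), finRotate _ i = ⟨(i + 1) % _, Nat.mod_lt _ i.pos⟩ :=
    fun i => Fin.ext (val_finRotate i)
  simp only [← hrotate, ← forall_top7_adj_imp_adj_iff htwo]
  exact SchellingGame.exists_isAssignment_card_le_SW_iff (g := game7 X H) (by simp) rfl
    top7_not_adj_none fun i => ⟨_, top7_adj_finRotate htwo i⟩
end

section
/- For every k ≥ 2 there exists a k-typed Schelling game with no stubborn agents (all agents strategic) whose topology is a star with k+2 nodes, which admits an equilibrium assignment with social welfare 0 and also admits an equilibrium assignment with strictly positive social welfare; consequently the price of anarchy of k-typed Schelling games with no stubborn agents is unbounded. -/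
/-!
On a star whose center is occupied, every assignment is an equilibrium: an agent on a leaf has the
agent at the center as her only neighbor, wherever she moves, and the agent at the center loses all
her neighbors by leaving. The welfare of such an assignment is zero if the agent at the center has
no friends, and positive if she is strategic and has one. As soon as there are two types and more
agents than types, the types can be chosen so that some agent is alone in her type, while two
others share a type; placing one or the other kind of agent at the center gives the two equilibria.
-/

theorem injective_update_of_forall_ne {α β : Type*} [DecidableEq α] {f : α → β}
    (hf : Function.Injective f) (a : α) {b : β} (hb : ∀ x, f x ≠ b) :
    Function.Injective (Function.update f a b) := by
  intro x y hxy
  simp only [Function.update_apply] at hxy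
  split_ifs at hxy with hx hy hy
  · exact hx.trans hy.symm
  · exact absurd hxy.symm (hb y)
  · exact absurd hxy (hb x)
  · exact hf hxy

theorem exists_surjective_fin_singleton_fiber {A : Type*} [Fintype A] {k : ℕ} (hk : 2 ≤ k)
    (hA : k ≤ Fintype.card A) :
    ∃ f : A → Fin k, Function.Surjective f ∧ ∃ p, ∀ j, f j = f p → j = p := by
  let e := Fintype.equivFin A
  refine ⟨fun a ↦ ⟨min (e a) (k - 1), by omega⟩, fun c ↦ ⟨e.symm ⟨c, by omega⟩, ?_⟩,
    e.symm ⟨0, by omega⟩, fun j hj ↦ ?_⟩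
  · ext
    simp only [Equiv.apply_symm_apply]
    omega
  · simp only [Equiv.apply_symm_apply, Fin.mk.injEq] at hj
    rw [Equiv.eq_symm_apply, Fin.ext_iff]
    simpa [show k - 1 ≠ 0 by omega] using hj

namespace SchellingGame

open Function SimpleGraph

section Utility

variable {A V : Type} (g : SchellingGame A V) (v : A → V) (i : A)

theorem util_nonneg : 0 ≤ g.util v i := by
  unfold util
  split_ifs <;> positivity

variable {g v i} in
theorem util_congr {w : A → V} (h : ∀ j, g.top.Adj (w i) (w j) ↔ g.top.Adj (v i) (v j)) :
    g.util w i = g.util v i := by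
  have hf : g.fcount w i = g.fcount v i := by simp only [fcount, h]
  have he : g.ecount w i = g.ecount v i := by simp only [ecount, h]
  simp only [util, hf, he]

variable [Finite A]

theorem fcount_eq_zero_iff :
    g.fcount v i = 0 ↔ ∀ j, g.net.Adj i j → ¬ g.top.Adj (v i) (v j) := by
  simp [fcount, Finite.card_eq_zero_iff, isEmpty_subtype]

theorem util_eq_zero_iff :
    g.util v i = 0 ↔ ∀ j, g.net.Adj i j → ¬ g.top.Adj (v i) (v j) := by
  rw [← fcount_eq_zero_iff]
  refine ⟨fun hutil ↦ ?_, fun hf ↦ if_pos hf⟩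
  by_contra hf
  rw [util, if_neg hf] at hutil
  have : (g.fcount v i : ℚ) / (g.fcount v i + g.ecount v i) ≠ 0 := by positivity
  exact this hutil

end Utility

theorem exists_isAssignment_apply_eq {A V : Type} [Fintype A] [Fintype V]
    {g : SchellingGame A V} (hS : g.strategic = Finset.univ)
    (hcard : Fintype.card A ≤ Fintype.card V) (p : A) (c : V) :
    ∃ v, g.IsAssignment v ∧ v p = c := by
  classical
  obtain ⟨f⟩ := Embedding.nonempty_of_card_le hcard
  exact ⟨f.setValue p c, ⟨(f.setValue p c).injective, by simp [hS]⟩, f.setValue_eq p c⟩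

section StarTopology

variable {A V : Type} {g : SchellingGame A V} {v : A → V} {c : V} {p : A}

theorem top_adj_apply_iff (htop : g.top = starGraph c) (hv : Injective v) (hp : v p = c)
    {i j : A} : g.top.Adj (v i) (v j) ↔ i ≠ j ∧ (i = p ∨ j = p) := by
  simp only [htop, starGraph_adj, ← hp, hv.eq_iff, ne_eq]

theorem not_top_adj_apply_of_center_unoccupied (htop : g.top = starGraph c)
    (hc : ∀ j, v j ≠ c) (i j : A) : ¬ g.top.Adj (v i) (v j) := by
  simp [htop, starGraph_adj, hc]

variable [Finite A]

theorem isEquilibrium_of_center_occupied [DecidableEq A] (htop : g.top = starGraph c)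
    (hv : g.IsAssignment v) (hp : v p = c) : g.IsEquilibrium v := by
  refine ⟨hv, fun i _ z hz ↦ ?_⟩
  have hzc : z ≠ c := fun h ↦ hz p (hp.trans h.symm)
  by_cases hip : i = p
  · subst hip
    have hempty : ∀ j, update v i z j ≠ c := fun j ↦ by
      by_cases hj : j = i
      · simpa [hj] using hzc
      · simpa [hj, ← hp] using hv.1.ne hj
    have hzero : g.util (update v i z) i = 0 := (g.util_eq_zero_iff _ i).2 fun j _ ↦
      not_top_adj_apply_of_center_unoccupied htop hempty i j
    exact hzero.trans_le (g.util_nonneg v i)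
  · have hinj : Injective (update v i z) := injective_update_of_forall_ne hv.1 i hz
    have hpc : update v i z p = c := by rwa [update_of_ne (Ne.symm hip)]
    refine (util_congr fun j ↦ ?_).le
    rw [top_adj_apply_iff htop hinj hpc, top_adj_apply_iff htop hv.1 hp]

theorem SW_eq_zero_of_center_friendless (htop : g.top = starGraph c) (hv : Injective v)
    (hp : v p = c) (hfriend : ∀ j, ¬ g.net.Adj p j) : g.SW v = 0 := by
  refine Finset.sum_eq_zero fun i _ ↦ (g.util_eq_zero_iff v i).2 fun j hij hadj ↦ ?_
  obtain rfl | rfl := ((top_adj_apply_iff htop hv hp).1 hadj).2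
  · exact hfriend j hij
  · exact hfriend i hij.symm

theorem SW_pos_of_center_friend (htop : g.top = starGraph c) (hv : Injective v)
    (hp : v p = c) (hpS : p ∈ g.strategic) {q : A} (hpq : g.net.Adj p q) : 0 < g.SW v := by
  have hadj : g.top.Adj (v p) (v q) := (top_adj_apply_iff htop hv hp).2 ⟨hpq.ne, .inl rfl⟩
  have hutil : g.util v p ≠ 0 := fun h ↦ (g.util_eq_zero_iff v p).1 h q hpq hadj
  exact Finset.sum_pos' (fun i _ ↦ g.util_nonneg v i)
    ⟨p, hpS, (g.util_nonneg v p).lt_of_ne' hutil⟩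

end StarTopology

section StarGame

variable {A V : Type} [Fintype A]

/-- The Schelling game with type map `typ` and without stubborn agents on the star with center `c`.
The value of `loc` is arbitrary, since it only matters for stubborn agents. -/
def starGame {T : Type*} (typ : A → T) (c : V) : SchellingGame A V where
  strategic := Finset.univ
  net := { Adj := fun i j ↦ i ≠ j ∧ typ i = typ j
           symm := ⟨fun _ _ h ↦ ⟨h.1.symm, h.2.symm⟩⟩
           loopless := ⟨fun _ h ↦ h.1 rfl⟩ }
  top := starGraph c
  loc := fun _ ↦ c

theorem isTypedGame_starGame {k : ℕ} {typ : A → Fin k} (htyp : Surjective typ) (c : V) :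
    (starGame typ c).IsTypedGame k typ :=
  ⟨fun _ _ ↦ Iff.rfl, htyp⟩

variable [Fintype V] [DecidableEq A] {T : Type*}

theorem wellFormed_starGame (hA : 2 ≤ Fintype.card A) (hV : Fintype.card A < Fintype.card V)
    (typ : A → T) (c : V) : (starGame typ c).WellFormed :=
  ⟨hA, hV, by simp [starGame]⟩

theorem exists_isEquilibrium_starGame_SW_eq_zero (hV : Fintype.card A ≤ Fintype.card V)
    {typ : A → T} {p : A} (hp : ∀ j, typ j = typ p → j = p) (c : V) :
    ∃ v, (starGame typ c).IsEquilibrium v ∧ (starGame typ c).SW v = 0 := by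
  obtain ⟨v, hv, hvp⟩ := exists_isAssignment_apply_eq (g := starGame typ c) rfl hV p c
  exact ⟨v, isEquilibrium_of_center_occupied rfl hv hvp,
    SW_eq_zero_of_center_friendless rfl hv.1 hvp fun j hj ↦ hj.1 (hp j hj.2.symm).symm⟩

theorem exists_isEquilibrium_starGame_SW_pos (hV : Fintype.card A ≤ Fintype.card V)
    {typ : A → T} {p q : A} (hpq : p ≠ q) (htyp : typ p = typ q) (c : V) :
    ∃ v, (starGame typ c).IsEquilibrium v ∧ 0 < (starGame typ c).SW v := by
  obtain ⟨v, hv, hvp⟩ := exists_isAssignment_apply_eq (g := starGame typ c) rfl hV p c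
  exact ⟨v, isEquilibrium_of_center_occupied rfl hv hvp,
    SW_pos_of_center_friend rfl hv.1 hvp (Finset.mem_univ p) ⟨hpq, htyp⟩⟩

end StarGame

end SchellingGame

open SchellingGame in
theorem stmt8_general {A V : Type} [Fintype A] [DecidableEq A] [Fintype V] {k : ℕ} (hk : 2 ≤ k)
    (hA : k < Fintype.card A) (hV : Fintype.card A < Fintype.card V) :
    ∃ (g : SchellingGame A V) (typ : A → Fin k),
      g.WellFormed ∧ g.IsTypedGame k typ ∧ g.strategic = Finset.univ ∧
      IsStar g.top ∧
      (∃ v, g.IsEquilibrium v ∧ g.SW v = 0) ∧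
      (∃ v, g.IsEquilibrium v ∧ 0 < g.SW v) := by
  obtain ⟨c⟩ : Nonempty V := Fintype.card_pos_iff.1 (by omega)
  obtain ⟨typ, hsurj, p, hp⟩ := exists_surjective_fin_singleton_fiber hk hA.le
  obtain ⟨i, j, hij, htyp⟩ : ∃ i j, i ≠ j ∧ typ i = typ j :=
    Fintype.exists_ne_map_eq_of_card_lt typ (by simpa using hA)
  exact ⟨starGame typ c, typ, wellFormed_starGame (by omega) hV typ c,
    isTypedGame_starGame hsurj c, rfl, ⟨c, fun _ _ ↦ SimpleGraph.starGraph_adj⟩,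
    exists_isEquilibrium_starGame_SW_eq_zero hV.le hp c,
    exists_isEquilibrium_starGame_SW_pos hV.le hij htyp c⟩

/-- For every k ≥ 2 there is a k-typed Schelling game with no stubborn
agents whose topology is a star with k+2 nodes admitting both an equilibrium with
social welfare 0 and an equilibrium with strictly positive social welfare (hence
the price of anarchy of such games is unbounded). -/
theorem stmt8 (k : ℕ) (hk : 2 ≤ k) :
    ∃ (g : SchellingGame (Fin (k + 1)) (Fin (k + 2))) (typ : Fin (k + 1) → Fin k),
      g.WellFormed ∧ g.IsTypedGame k typ ∧ g.strategic = Finset.univ ∧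
      IsStar g.top ∧
      (∃ v, g.IsEquilibrium v ∧ g.SW v = 0) ∧
      (∃ v, g.IsEquilibrium v ∧ 0 < g.SW v) :=
  stmt8_general hk (by simp) (by simp)
end
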